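/- Slack generation with custom color space: Let c' > 0 be a constant, Δ_s and χ positive integers with χ ≥ c'Δ_s, and let S ⊆ V be a set of nodes of a graph G. Run SlackGeneration on S with palette [χ]: each u ∈ S is independently activated with probability 1/20; each activated u picks a color c_u uniformly at random from [χ]; u retains c_u iff no other activated node of S adjacent to u picked the same color. Let v ∈ V be a node such that the graph G[N(v) ∩ S] contains at least m̄ non-edges, and suppose every node of S ∪ {v} has at most Δ_s neighbors in S. Then there exist constants a, b > 0 depending only on c' such that, with probability at least 1 − exp(−b·m̄/χ), the slack increase of v — that is, the number of neighbors of v that retain a color minus the number of distinct colors retained by neighbors of v — is at least a·m̄/χ. -/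

import Mathlib

open Finset

namespace SlackGen

variable {V : Type*} [Fintype V] [DecidableEq V] {χ : ℕ}

/-- An outcome of SlackGeneration: the activation status and the color choice of
each node. -/
abbrev Outcome (V : Type*) (χ : ℕ) := (V → Bool) × (V → Fin χ)

/-- Probability weight of an outcome: each node is activated independently with
probability `p₀`, and independently picks a uniformly random color from `[χ]`. -/
noncomputable def wgt (p₀ : ℝ) (χ : ℕ) {V : Type*} [Fintype V] (ω : Outcome V χ) : ℝ :=
  ∏ v : V, ((if ω.1 v then p₀ else 1 - p₀) * (1 / (χ : ℝ)))

/-- `u` picks color `c`: `u ∈ S`, `u` is activated, and `u` chose color `c`. -/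
def Picks (S : Finset V) (ω : Outcome V χ) (u : V) (c : Fin χ) : Prop :=
  u ∈ S ∧ ω.1 u = true ∧ ω.2 u = c

/-- `u ∈ S` retains its color: `u` is activated and no other activated node of `S`
adjacent to `u` chose the same color. -/
def Retains (G : SimpleGraph V) (S : Finset V) (ω : Outcome V χ) (u : V) : Prop :=
  u ∈ S ∧ ω.1 u = true ∧
    ∀ w ∈ S, w ≠ u → G.Adj u w → ω.1 w = true → ω.2 w ≠ ω.2 u

open Classical in
/-- The slack increase of `v`: the number of neighbors of `v` that retain a color
minus the number of distinct colors retained by neighbors of `v`. -/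
noncomputable def slackInc (G : SimpleGraph V) (S : Finset V) (v : V)
    (ω : Outcome V χ) : ℤ :=
  ((Finset.univ.filter fun u => G.Adj v u ∧ Retains G S ω u).card : ℤ) -
    ((Finset.univ.filter fun c : Fin χ =>
        ∃ u, G.Adj v u ∧ Retains G S ω u ∧ ω.2 u = c).card : ℤ)

open Classical in
/-- The non-edges of the graph induced on `N(v) ∩ S`: unordered pairs of distinct
non-adjacent vertices, both neighbors of `v` and both in `S`. -/
noncomputable def nbrNonEdges (G : SimpleGraph V) (v : V) (S : Finset V) :
    Finset (Sym2 V) :=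
  Finset.univ.filter fun e : Sym2 V =>
    ¬ e.IsDiag ∧ e ∉ G.edgeSet ∧ ∀ u ∈ e, G.Adj v u ∧ u ∈ S

end SlackGen

namespace SlackGen

/-!
A color whose class meets the neighborhoods of `v` and of both ends of some non-edge `e` in exactly
the ends of `e` is retained by both ends, so the number `X` of such colors is a lower bound for the
slack increase. The lower tail of `X` is controlled by exposing the color classes one at a time.
Let `M` count the non-edges with both ends still uncolored. The next class contains each uncolored
node independently with a probability `θ` of order `1 / χ`, so it increases `X` with probability of
order at least `M / χ ^ 2`, since `O(χ)` nodes have to avoid it. It also destroys `O(M / χ)`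
non-edges in expectation, each of which is worth at most a small multiple of `1 / χ` over all later
colors, so the gain outweighs the loss. By induction on the number of colors,
`𝔼 exp (-X) ≤ exp (-2 κ M / χ)` for a constant `κ`, and Markov's inequality concludes.
-/

section BernoulliSubset

variable {W : Type*} [DecidableEq W]

/-- The probability that the random subset of `R` containing each element of `R` independently with
probability `θ` equals `A`, for `A ⊆ R`. -/
def bernoulliWgt (θ : ℝ) (R A : Finset W) : ℝ :=
  θ ^ #A * (1 - θ) ^ #(R \ A)

theorem bernoulliWgt_nonneg {θ : ℝ} (hθ₀ : 0 ≤ θ) (hθ₁ : θ ≤ 1) (R A : Finset W) :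
    0 ≤ bernoulliWgt θ R A :=
  mul_nonneg (pow_nonneg hθ₀ _) (pow_nonneg (sub_nonneg.2 hθ₁) _)

theorem sum_bernoulliWgt_mul_prod (θ : ℝ) (R : Finset W) (x : W → ℝ) :
    ∑ A ∈ R.powerset, bernoulliWgt θ R A * ∏ u ∈ A, x u = ∏ u ∈ R, (θ * x u + (1 - θ)) := by
  rw [prod_add]
  refine sum_congr rfl fun A _ => ?_
  rw [prod_mul_distrib, prod_const, prod_const, bernoulliWgt]
  ring

theorem sum_bernoulliWgt (θ : ℝ) (R : Finset W) :
    ∑ A ∈ R.powerset, bernoulliWgt θ R A = 1 := by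
  simpa using sum_bernoulliWgt_mul_prod θ R fun _ => 1

theorem mul_bernoulliWgt_div {p r : ℝ} (h : p + r ≠ 0) {R A : Finset W} (hA : A ⊆ R) :
    (p + r) ^ #R * bernoulliWgt (p / (p + r)) R A = p ^ #A * r ^ #(R \ A) := by
  have hr : 1 - p / (p + r) = r / (p + r) := by
    field_simp
    ring
  rw [bernoulliWgt, hr, div_pow, div_pow, ← card_sdiff_add_card_eq_card hA, pow_add]
  field_simp

theorem sum_bernoulliWgt_mul_exp_sum_le {θ : ℝ} (hθ₀ : 0 ≤ θ) (hθ₁ : θ ≤ 1) {R : Finset W}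
    {g : W → ℝ} (hg₀ : ∀ u, 0 ≤ g u) (hg₁ : ∀ u, g u ≤ 1) :
    ∑ A ∈ R.powerset, bernoulliWgt θ R A * Real.exp (∑ u ∈ A, g u) ≤
      Real.exp (2 * θ * ∑ u ∈ R, g u) := by
  have exp_le : ∀ u, Real.exp (g u) ≤ 1 + 2 * g u := fun u => by
    have h := Real.abs_exp_sub_one_le (abs_le.2 ⟨by linarith [hg₀ u], hg₁ u⟩)
    rw [abs_of_nonneg (hg₀ u)] at h
    linarith [le_abs_self (Real.exp (g u) - 1)]
  simp_rw [Real.exp_sum, sum_bernoulliWgt_mul_prod, mul_sum, Real.exp_sum]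
  refine prod_le_prod (fun u _ => ?_) fun u _ => ?_
  · exact add_nonneg (mul_nonneg hθ₀ (Real.exp_nonneg _)) (sub_nonneg.2 hθ₁)
  · calc θ * Real.exp (g u) + (1 - θ)
        ≤ θ * (1 + 2 * g u) + (1 - θ) := by gcongr; exact exp_le u
      _ = 2 * θ * g u + 1 := by ring
      _ ≤ Real.exp (2 * θ * g u) := Real.add_one_le_exp _

theorem sum_bernoulliWgt_inter_eq (θ : ℝ) {R D B : Finset W} (hBR : B ⊆ R) (hBD : B ⊆ D) :
    ∑ A ∈ R.powerset with A ∩ D = B, bernoulliWgt θ R A = θ ^ #B * (1 - θ) ^ #((R ∩ D) \ B) := by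
  have agree_iff : ∀ A ∈ R.powerset,
      A ∩ D = B ↔ (∀ u ∈ A, u ∈ D → u ∈ B) ∧ ∀ u ∈ R \ A, u ∈ D → u ∉ B := fun A hA => by
    rw [mem_powerset] at hA
    constructor
    · rintro rfl
      grind
    · rintro ⟨h₁, h₂⟩
      ext u
      have := @hBR u
      have := @hBD u
      grind
  calc ∑ A ∈ R.powerset with A ∩ D = B, bernoulliWgt θ R A
      = ∑ A ∈ R.powerset, (∏ u ∈ A, if u ∈ D → u ∈ B then θ else 0) *
          ∏ u ∈ R \ A, if u ∈ D → u ∉ B then 1 - θ else 0 := by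
        rw [sum_filter]
        refine sum_congr rfl fun A hA => ?_
        simp only [prod_ite_zero, prod_const, ite_zero_mul_ite_zero, agree_iff A hA, bernoulliWgt]
    _ = ∏ u ∈ R, ((if u ∈ B then θ else 1) * if u ∈ (R ∩ D) \ B then 1 - θ else 1) := by
        rw [← prod_add]
        refine prod_congr rfl fun u hu => ?_
        have := @hBD u
        by_cases hB : u ∈ B <;> by_cases hD : u ∈ D <;> simp_all
    _ = θ ^ #B * (1 - θ) ^ #((R ∩ D) \ B) := by
        rw [prod_mul_distrib, prod_ite_mem, prod_ite_mem, prod_const, prod_const,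
          inter_eq_right.2 hBR, inter_eq_right.2 (sdiff_subset.trans inter_subset_left)]

end BernoulliSubset

section Isolation

variable {W : Type*} [DecidableEq W]

/-- The vertex set `A` isolates a pair `e` of `E` if it meets the guard set `D e` exactly in `e`.
For a color class `A` and a non-edge `e`, this makes both ends of `e` retain their color. -/
def Isolates (E : Finset (Sym2 W)) (D : Sym2 W → Finset W) (A : Finset W) : Prop :=
  ∃ e ∈ E, A ∩ D e = e.toFinset

instance (E : Finset (Sym2 W)) (D : Sym2 W → Finset W) : DecidablePred (Isolates E D) :=
  fun A => inferInstanceAs (Decidable (∃ e ∈ E, A ∩ D e = e.toFinset))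

/-- Each pair of `E` has a guard set of size at most `d` containing the vertices of all pairs
of `E`, so that a vertex set isolates at most one pair. -/
structure IsGuarded (E : Finset (Sym2 W)) (D : Sym2 W → Finset W) (d : ℕ) : Prop where
  not_isDiag : ∀ e ∈ E, ¬ e.IsDiag
  toFinset_subset : ∀ e ∈ E, ∀ e' ∈ E, e.toFinset ⊆ D e'
  card_le : ∀ e ∈ E, #(D e) ≤ d

variable {E : Finset (Sym2 W)} {D : Sym2 W → Finset W} {d : ℕ}

theorem IsGuarded.eq_of_inter_eq (h : IsGuarded E D d) {A : Finset W} {e e' : Sym2 W} (he : e ∈ E)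
    (he' : e' ∈ E) (hA : A ∩ D e = e.toFinset) (hA' : A ∩ D e' = e'.toFinset) : e = e' := by
  have hsub : e.toFinset ⊆ e'.toFinset :=
    hA' ▸ subset_inter (hA ▸ inter_subset_left) (h.toFinset_subset e he e' he')
  have heq : e.toFinset = e'.toFinset := eq_of_subset_of_card_le hsub <| by
    rw [e.card_toFinset_of_not_isDiag (h.not_isDiag e he),
      e'.card_toFinset_of_not_isDiag (h.not_isDiag e' he')]
  exact Sym2.ext fun u => by rw [← Sym2.mem_toFinset, heq, Sym2.mem_toFinset]

theorem IsGuarded.card_filter_mem_le (h : IsGuarded E D d) (u : W) : #{e ∈ E | u ∈ e} ≤ d := by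
  obtain hE | ⟨e₀, he₀⟩ := E.eq_empty_or_nonempty
  · simp [hE]
  have hsub : {e ∈ E | u ∈ e} ⊆ (D e₀).image fun w => s(u, w) := fun e he => by
    obtain ⟨heE, hu⟩ := mem_filter.1 he
    obtain ⟨w, rfl⟩ := hu
    exact mem_image_of_mem _ (h.toFinset_subset _ heE _ he₀ (by simp))
  exact (card_le_card hsub).trans (card_image_le.trans (h.card_le e₀ he₀))

theorem sum_card_filter_mem_eq_two_mul {R : Finset W} (hE : ∀ e ∈ E, ¬ e.IsDiag)
    (hR : E ⊆ R.sym2) : ∑ u ∈ R, #{e ∈ E | u ∈ e} = 2 * #E := by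
  have hends : ∀ e ∈ E, #{u ∈ R | u ∈ e} = 2 := fun e he => by
    rw [← e.card_toFinset_of_not_isDiag (hE e he)]
    congr 1
    ext u
    simpa using mem_sym2_iff.1 (hR he) u
  calc ∑ u ∈ R, #{e ∈ E | u ∈ e} = ∑ e ∈ E, #{u ∈ R | u ∈ e} :=
        sum_card_bipartiteAbove_eq_sum_card_bipartiteBelow (· ∈ ·)
    _ = 2 * #E := by rw [sum_congr rfl hends, sum_const, smul_eq_mul, mul_comm]

theorem card_inter_sym2_le_add_sum (E : Finset (Sym2 W)) (R A : Finset W) :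
    #(E ∩ R.sym2) ≤ #(E ∩ (R \ A).sym2) + ∑ u ∈ A, #{e ∈ E ∩ R.sym2 | u ∈ e} := by
  have hsub : E ∩ R.sym2 ⊆
      E ∩ (R \ A).sym2 ∪ A.biUnion fun u => {e ∈ E ∩ R.sym2 | u ∈ e} := fun e he => by
    simp only [mem_union, mem_biUnion, mem_filter, mem_inter, mem_sym2_iff, mem_sdiff] at he ⊢
    grind
  exact (card_le_card hsub).trans ((card_union_le _ _).trans (by gcongr; exact card_biUnion_le))

theorem IsGuarded.card_mul_le_sum_isolates (h : IsGuarded E D d) {θ : ℝ} (hθ₀ : 0 ≤ θ)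
    (hθ₁ : θ ≤ 1) (R : Finset W) :
    #(E ∩ R.sym2) * (θ ^ 2 * (1 - θ) ^ d) ≤
      ∑ A ∈ R.powerset with Isolates E D A, bernoulliWgt θ R A := by
  have hθ : 0 ≤ 1 - θ := sub_nonneg.2 hθ₁
  have le_sum_inter_eq : ∀ e ∈ E ∩ R.sym2, θ ^ 2 * (1 - θ) ^ d ≤
      ∑ A ∈ R.powerset with A ∩ D e = e.toFinset, bernoulliWgt θ R A := fun e he => by
    obtain ⟨heE, heR⟩ := mem_inter.1 he
    have hcard : #((R ∩ D e) \ e.toFinset) ≤ d :=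
      (card_le_card (sdiff_subset.trans inter_subset_right)).trans (h.card_le e heE)
    rw [sum_bernoulliWgt_inter_eq θ (fun u hu => mem_sym2_iff.1 heR u (Sym2.mem_toFinset.1 hu))
      (h.toFinset_subset e heE e heE), e.card_toFinset_of_not_isDiag (h.not_isDiag e heE)]
    exact mul_le_mul_of_nonneg_left
      (pow_le_pow_of_le_one hθ (sub_le_self 1 hθ₀) hcard) (sq_nonneg θ)
  have hdisj : Set.PairwiseDisjoint (↑(E ∩ R.sym2))
      fun e => {A ∈ R.powerset | A ∩ D e = e.toFinset} := fun e he e' he' hne =>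
    disjoint_left.2 fun A hA hA' => hne <|
      h.eq_of_inter_eq (mem_inter.1 he).1 (mem_inter.1 he').1 (mem_filter.1 hA).2
        (mem_filter.1 hA').2
  calc #(E ∩ R.sym2) * (θ ^ 2 * (1 - θ) ^ d)
      ≤ ∑ e ∈ E ∩ R.sym2, ∑ A ∈ R.powerset with A ∩ D e = e.toFinset, bernoulliWgt θ R A := by
        rw [← nsmul_eq_mul]
        exact card_nsmul_le_sum _ _ _ le_sum_inter_eq
    _ = ∑ A ∈ (E ∩ R.sym2).biUnion fun e => {A ∈ R.powerset | A ∩ D e = e.toFinset},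
          bernoulliWgt θ R A := (sum_biUnion hdisj).symm
    _ ≤ ∑ A ∈ R.powerset with Isolates E D A, bernoulliWgt θ R A := by
        refine sum_le_sum_of_subset_of_nonneg (fun A hA => ?_) fun A _ _ =>
          bernoulliWgt_nonneg hθ₀ hθ₁ R A
        simp only [mem_biUnion, mem_filter, mem_inter] at hA ⊢
        obtain ⟨e, he, hAR, hAe⟩ := hA
        exact ⟨hAR, e, he.1, hAe⟩

theorem natCast_mul_mul_one_sub_pow_le_one (d : ℕ) {θ : ℝ} (hθ₀ : 0 ≤ θ) (hθ₁ : θ ≤ 1) :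
    d * (θ * (1 - θ) ^ d) ≤ 1 := by
  have : 0 ≤ 1 - θ := sub_nonneg.2 hθ₁
  calc d * (θ * (1 - θ) ^ d) = d * θ * (1 - θ) ^ d := by ring
    _ ≤ (1 + θ) ^ d * (1 - θ) ^ d := by
        gcongr
        linarith [one_add_mul_le_pow (by linarith : -2 ≤ θ) d]
    _ = (1 - θ ^ 2) ^ d := by rw [← mul_pow]; ring
    _ ≤ 1 := pow_le_one₀ (by nlinarith) (by nlinarith)

/-- The factor `exp (-1)` for each isolating color class, which makes the product over all colors
the exponential of minus the number of isolating classes. -/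
noncomputable def isolationFactor (E : Finset (Sym2 W)) (D : Sym2 W → Finset W)
    (A : Finset W) : ℝ :=
  if Isolates E D A then Real.exp (-1) else 1

theorem isolationFactor_nonneg (E : Finset (Sym2 W)) (D : Sym2 W → Finset W) (A : Finset W) :
    0 ≤ isolationFactor E D A := by
  unfold isolationFactor
  positivity

theorem prod_isolationFactor {C : Type*} [Fintype C] (A : C → Finset W) :
    ∏ c, isolationFactor E D (A c) = Real.exp (-#{c | Isolates E D (A c)}) := by
  simp only [isolationFactor, prod_ite, prod_const, one_pow, mul_one, ← Real.exp_nat_mul, mul_neg]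

theorem isolationFactor_mul_le {y : ℝ} (hy : 1 ≤ y) (A : Finset W) :
    isolationFactor E D A * y ≤ y - if Isolates E D A then 1 / 2 else 0 := by
  unfold isolationFactor
  split_ifs
  · nlinarith [Real.exp_neg_one_lt_half]
  · linarith

theorem IsGuarded.sum_bernoulliWgt_mul_exp_loss_le (h : IsGuarded E D d) {θ lam : ℝ}
    (hθ₀ : 0 ≤ θ) (hθ₁ : θ ≤ 1) (hlam : 0 ≤ lam) (hlam_d : lam * d ≤ 1) (R : Finset W) :
    ∑ A ∈ R.powerset, bernoulliWgt θ R A *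
        Real.exp (lam * (#(E ∩ R.sym2) - #(E ∩ (R \ A).sym2))) ≤
      Real.exp (4 * θ * lam * #(E ∩ R.sym2)) := by
  have loss_le : ∀ A : Finset W, lam * ((#(E ∩ R.sym2) : ℝ) - #(E ∩ (R \ A).sym2)) ≤
      ∑ u ∈ A, lam * #{e ∈ E ∩ R.sym2 | u ∈ e} := fun A => by
    rw [← mul_sum]
    gcongr
    rw [sub_le_iff_le_add']
    exact_mod_cast card_inter_sym2_le_add_sum E R A
  have degree_le : ∀ u, lam * #{e ∈ E ∩ R.sym2 | u ∈ e} ≤ 1 := fun u => by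
    refine le_trans ?_ hlam_d
    gcongr
    exact (card_le_card (filter_subset_filter _ inter_subset_left)).trans (h.card_filter_mem_le u)
  have degree_sum : ∑ u ∈ R, (#{e ∈ E ∩ R.sym2 | u ∈ e} : ℝ) = 2 * #(E ∩ R.sym2) := by
    exact_mod_cast sum_card_filter_mem_eq_two_mul
      (fun e he => h.not_isDiag e (mem_inter.1 he).1) inter_subset_right
  calc _ ≤ ∑ A ∈ R.powerset, bernoulliWgt θ R A *
          Real.exp (∑ u ∈ A, lam * #{e ∈ E ∩ R.sym2 | u ∈ e}) := by
        gcongr with A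
        · exact bernoulliWgt_nonneg hθ₀ hθ₁ R A
        · exact loss_le A
    _ ≤ Real.exp (2 * θ * ∑ u ∈ R, lam * #{e ∈ E ∩ R.sym2 | u ∈ e}) :=
        sum_bernoulliWgt_mul_exp_sum_le hθ₀ hθ₁ (fun u => by positivity) degree_le
    _ = Real.exp (4 * θ * lam * #(E ∩ R.sym2)) := by
        rw [← mul_sum, degree_sum]
        ring_nf

theorem sum_bernoulliWgt_mul_isolationFactor_mul_le {θ : ℝ} (hθ₀ : 0 ≤ θ) (hθ₁ : θ ≤ 1)
    (R : Finset W) {y : Finset W → ℝ} (hy : ∀ A, 1 ≤ y A) :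
    ∑ A ∈ R.powerset, bernoulliWgt θ R A * (isolationFactor E D A * y A) ≤
      ∑ A ∈ R.powerset, bernoulliWgt θ R A * y A -
        (∑ A ∈ R.powerset with Isolates E D A, bernoulliWgt θ R A) / 2 := by
  calc _ ≤ ∑ A ∈ R.powerset, bernoulliWgt θ R A * (y A - if Isolates E D A then 1 / 2 else 0) := by
        gcongr with A
        · exact bernoulliWgt_nonneg hθ₀ hθ₁ R A
        · exact isolationFactor_mul_le (hy A) A
    _ = _ := by
        simp only [mul_sub, sum_sub_distrib, mul_ite, mul_zero, ← sum_filter, mul_one_div,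
          sum_div]

theorem IsGuarded.sum_bernoulliWgt_mul_isolationFactor_mul_exp_loss_le (h : IsGuarded E D d)
    {θ lam mu : ℝ} (hθ₀ : 0 ≤ θ) (hθ₁ : θ ≤ 1) (hlam : 0 ≤ lam)
    (hlam_le : 32 * lam ≤ θ * (1 - θ) ^ d) (hmu_le : 4 * mu ≤ θ ^ 2 * (1 - θ) ^ d)
    (R : Finset W) :
    ∑ A ∈ R.powerset, bernoulliWgt θ R A * (isolationFactor E D A *
        Real.exp (lam * (#(E ∩ R.sym2) - #(E ∩ (R \ A).sym2)))) ≤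
      Real.exp (-(mu * #(E ∩ R.sym2))) := by
  set M := (#(E ∩ R.sym2) : ℝ)
  set P : ℝ := ∑ A ∈ R.powerset with Isolates E D A, bernoulliWgt θ R A
  have loss_nonneg : ∀ A, 0 ≤ lam * (M - #(E ∩ (R \ A).sym2)) := fun A =>
    mul_nonneg hlam <| sub_nonneg.2 <| Nat.cast_le.2 <| card_le_card <|
      inter_subset_inter_left <| sym2_mono sdiff_subset
  have le_P : M * (θ ^ 2 * (1 - θ) ^ d) ≤ P := h.card_mul_le_sum_isolates hθ₀ hθ₁ R
  have P_le_one : P ≤ 1 := (sum_bernoulliWgt θ R).symm ▸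
    sum_le_sum_of_subset_of_nonneg (filter_subset _ _) fun A _ _ =>
      bernoulliWgt_nonneg hθ₀ hθ₁ R A
  have M_nonneg : 0 ≤ M := Nat.cast_nonneg _
  have lam_mul_le_one : lam * d ≤ 1 := by
    nlinarith [natCast_mul_mul_one_sub_pow_le_one d hθ₀ hθ₁, Nat.cast_nonneg (α := ℝ) d]
  have expected_loss_le : 32 * (θ * lam * M) ≤ P := by
    nlinarith [mul_le_mul_of_nonneg_left hlam_le (mul_nonneg hθ₀ M_nonneg)]
  have exp_le : Real.exp (4 * θ * lam * M) ≤ 1 + 8 * (θ * lam * M) := by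
    have habs : |4 * θ * lam * M| = 4 * θ * lam * M := abs_of_nonneg (by positivity)
    have hexp := Real.abs_exp_sub_one_le (x := 4 * θ * lam * M) (by linarith)
    linarith [le_abs_self (Real.exp (4 * θ * lam * M) - 1)]
  calc _ ≤ ∑ A ∈ R.powerset, bernoulliWgt θ R A * Real.exp (lam * (M - #(E ∩ (R \ A).sym2)))
          - P / 2 := sum_bernoulliWgt_mul_isolationFactor_mul_le hθ₀ hθ₁ R fun A =>
        Real.one_le_exp (loss_nonneg A)
    _ ≤ Real.exp (4 * θ * lam * M) - P / 2 := by
        gcongr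
        exact h.sum_bernoulliWgt_mul_exp_loss_le hθ₀ hθ₁ hlam lam_mul_le_one R
    _ ≤ -(mu * M) + 1 := by nlinarith
    _ ≤ Real.exp (-(mu * M)) := Real.add_one_le_exp _

theorem IsGuarded.sum_bernoulliWgt_mul_isolationFactor_le (h : IsGuarded E D d) {θ lam mu : ℝ}
    (hθ₀ : 0 ≤ θ) (hθ₁ : θ ≤ 1) (hlam : 0 ≤ lam) (hlam_le : 32 * lam ≤ θ * (1 - θ) ^ d)
    (hmu_le : 4 * mu ≤ θ ^ 2 * (1 - θ) ^ d) (R : Finset W) :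
    ∑ A ∈ R.powerset, bernoulliWgt θ R A *
        (isolationFactor E D A * Real.exp (-(lam * #(E ∩ (R \ A).sym2)))) ≤
      Real.exp (-((lam + mu) * #(E ∩ R.sym2))) := by
  calc _ = Real.exp (-(lam * #(E ∩ R.sym2))) * ∑ A ∈ R.powerset, bernoulliWgt θ R A *
          (isolationFactor E D A *
            Real.exp (lam * (#(E ∩ R.sym2) - #(E ∩ (R \ A).sym2)))) := by
        rw [mul_sum]
        refine sum_congr rfl fun A _ => ?_
        rw [mul_sub, sub_eq_neg_add, add_comm, Real.exp_add, Real.exp_neg (lam * #(E ∩ R.sym2))]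
        field_simp
    _ ≤ Real.exp (-(lam * #(E ∩ R.sym2))) * Real.exp (-(mu * #(E ∩ R.sym2))) := by
        gcongr
        exact h.sum_bernoulliWgt_mul_isolationFactor_mul_exp_loss_le hθ₀ hθ₁ hlam hlam_le hmu_le R
    _ = Real.exp (-((lam + mu) * #(E ∩ R.sym2))) := by rw [← Real.exp_add]; ring_nf

end Isolation

section Exposure

variable {W : Type*} [DecidableEq W] {p q : ℝ}

/-- The total weight of the assignments of `n` colors, or of no color, to the elements of `R`:
an element weighs `p` if it has a color and `q` otherwise, and each color class `A` contributes a
factor `w A`. The recursion exposes one color class `A` at a time. -/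
def exposureSum (p q : ℝ) (w : Finset W → ℝ) : ℕ → Finset W → ℝ
  | 0, R => q ^ #R
  | n + 1, R => ∑ A ∈ R.powerset, p ^ #A * w A * exposureSum p q w n (R \ A)

theorem exp_neg_mul_le_one_sub_div_pow (hp : 0 ≤ p) (hq : 0 < q) {r : ℝ} (hr : q ≤ r) (d : ℕ) :
    Real.exp (-(p / q * d)) ≤ (1 - p / (p + r)) ^ d := by
  have hr₀ : 0 < r := hq.trans_le hr
  have hle : Real.exp (-(p / q)) ≤ 1 - p / (p + r) := by
    calc Real.exp (-(p / q)) ≤ (1 + p / q)⁻¹ := by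
          rw [Real.exp_neg, add_comm]
          gcongr
          exact Real.add_one_le_exp _
      _ ≤ (1 + p / r)⁻¹ := by gcongr
      _ = 1 - p / (p + r) := by field_simp; ring
  calc Real.exp (-(p / q * d)) = Real.exp (-(p / q)) ^ d := by rw [← Real.exp_nat_mul]; ring_nf
    _ ≤ (1 - p / (p + r)) ^ d := by gcongr

variable {E : Finset (Sym2 W)} {D : Sym2 W → Finset W} {d : ℕ}

theorem exposureSum_succ_le (hp : 0 ≤ p) {r : ℝ} (hpr : p + r ≠ 0) {w : Finset W → ℝ}
    (hw : ∀ A, 0 ≤ w A) {n : ℕ} {R : Finset W} {x : Finset W → ℝ}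
    (hx : ∀ A ⊆ R, exposureSum p q w n (R \ A) ≤ r ^ #(R \ A) * x (R \ A)) :
    exposureSum p q w (n + 1) R ≤
      (p + r) ^ #R * ∑ A ∈ R.powerset, bernoulliWgt (p / (p + r)) R A * (w A * x (R \ A)) := by
  rw [exposureSum, mul_sum]
  refine sum_le_sum fun A hA => ?_
  rw [mem_powerset] at hA
  calc p ^ #A * w A * exposureSum p q w n (R \ A)
      ≤ p ^ #A * w A * (r ^ #(R \ A) * x (R \ A)) :=
        mul_le_mul_of_nonneg_left (hx A hA) (mul_nonneg (pow_nonneg hp _) (hw A))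
    _ = (p + r) ^ #R * bernoulliWgt (p / (p + r)) R A * (w A * x (R \ A)) := by
        rw [mul_bernoulliWgt_div hpr hA]
        ring
    _ = _ := mul_assoc _ _ _

theorem IsGuarded.exposureSum_isolationFactor_le (h : IsGuarded E D d) (hp : 0 ≤ p) (hq : 0 < q) :
    ∀ (n : ℕ) (R : Finset W), q + n * p ≤ 1 →
      exposureSum p q (isolationFactor E D) n R ≤ (q + n * p) ^ #R *
        Real.exp (-(n * (p ^ 2 * Real.exp (-(p / q * d)) / 32) * #(E ∩ R.sym2)))
  | 0, R, _ => by simp [exposureSum]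
  | n + 1, R, hn => by
    set ρ := Real.exp (-(p / q * d))
    set μ := p ^ 2 * ρ / 32
    set r := q + n * p
    have hpr : q + (n + 1 : ℕ) * p = p + r := by push_cast; ring
    rw [hpr] at hn ⊢
    -- `p / (p + r)` is the probability that a vertex gets the next exposed color, given that it
    -- has none of the colors exposed before.
    have hqr : q ≤ r := le_add_of_nonneg_right (by positivity)
    have : 0 < r := hq.trans_le hqr
    have rho_pos : 0 < ρ := Real.exp_pos _
    have le_theta : p ≤ p / (p + r) := le_div_self hp (by linarith) hn
    have theta_le_one : p / (p + r) ≤ 1 := div_le_one_of_le₀ (by linarith) (by linarith)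
    have rho_le : ρ ≤ (1 - p / (p + r)) ^ d := exp_neg_mul_le_one_sub_div_pow hp hq hqr d
    have lam_le : 32 * (n * μ) ≤ p / (p + r) * (1 - p / (p + r)) ^ d :=
      calc 32 * (n * μ) = n * p * (p * ρ) := by ring
        _ ≤ 1 * (p / (p + r) * (1 - p / (p + r)) ^ d) := by gcongr; linarith
        _ = _ := one_mul _
    have mu_le : 4 * μ ≤ (p / (p + r)) ^ 2 * (1 - p / (p + r)) ^ d :=
      calc 4 * μ = p ^ 2 * (ρ / 8) := by ring
        _ ≤ _ := by gcongr; linarith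
    calc exposureSum p q (isolationFactor E D) (n + 1) R
        ≤ (p + r) ^ #R * ∑ A ∈ R.powerset, bernoulliWgt (p / (p + r)) R A *
            (isolationFactor E D A * Real.exp (-(n * μ * #(E ∩ (R \ A).sym2)))) :=
          exposureSum_succ_le hp (by positivity) (isolationFactor_nonneg E D)
            (x := fun R => Real.exp (-(n * μ * #(E ∩ R.sym2)))) fun A _ =>
            h.exposureSum_isolationFactor_le hp hq n (R \ A) (by linarith)
      _ ≤ (p + r) ^ #R * Real.exp (-((n * μ + μ) * #(E ∩ R.sym2))) := by
          gcongr
          exact h.sum_bernoulliWgt_mul_isolationFactor_le (hp.trans le_theta) theta_le_one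
            (by positivity) lam_le mu_le R
      _ = _ := by push_cast; ring_nf

end Exposure

section Coloring

variable {W C : Type*}

/-- The weight of the value of a partial coloring at one vertex: `q` if the vertex is uncolored and
`p` if it has a color. -/
def valueWgt (p q : ℝ) : Option C → ℝ
  | none => q
  | some _ => p

variable [Fintype W] [DecidableEq W]

/-- The partial colorings with colors in `K` that leave all vertices outside `R` uncolored. -/
def partialColorings (K : Finset C) (R : Finset W) : Finset (W → Option C) :=
  Fintype.piFinset fun u => if u ∈ R then insertNone K else {none}

theorem mem_partialColorings {K : Finset C} {R : Finset W} {f : W → Option C} :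
    f ∈ partialColorings K R ↔ ∀ u c, f u = some c → u ∈ R ∧ c ∈ K := by
  rw [partialColorings, Fintype.mem_piFinset]
  refine forall_congr' fun u => ?_
  cases hf : f u <;> by_cases hu : u ∈ R <;> simp [hu]

theorem eq_none_of_mem_partialColorings {K : Finset C} {R : Finset W} {f : W → Option C}
    (hf : f ∈ partialColorings K R) {u : W} (hu : u ∉ R) : f u = none :=
  Option.eq_none_iff_forall_ne_some.2 fun c h => hu (mem_partialColorings.1 hf u c h).1

theorem ne_some_of_mem_partialColorings {K : Finset C} {R : Finset W} {f : W → Option C}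
    (hf : f ∈ partialColorings K R) {c : C} (hc : c ∉ K) (u : W) : f u ≠ some c :=
  fun h => hc (mem_partialColorings.1 hf u c h).2

variable [DecidableEq C]

/-- The color class of `c` in the partial coloring `f`. -/
def colorClass (f : W → Option C) (c : C) : Finset W :=
  {u | f u = some c}

theorem colorClass_piecewise_self (A : Finset W) {g : W → Option C} {c : C}
    (hg : ∀ u, g u ≠ some c) : colorClass (A.piecewise (fun _ => some c) g) c = A := by
  ext u
  by_cases hu : u ∈ A <;> simp [colorClass, hu, hg u]

theorem colorClass_piecewise_of_ne {A : Finset W} {g : W → Option C} {c c' : C}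
    (hg : ∀ u ∈ A, g u = none) (hc : c' ≠ c) :
    colorClass (A.piecewise (fun _ => some c) g) c' = colorClass g c' := by
  ext u
  by_cases hu : u ∈ A <;> simp [colorClass, hu, hg, hc.symm]

theorem sum_partialColorings_insert {M : Type*} [AddCommMonoid M] {K : Finset C} {c : C}
    (hc : c ∉ K) (R : Finset W) (F : (W → Option C) → M) :
    ∑ f ∈ partialColorings (insert c K) R, F f =
      ∑ A ∈ R.powerset, ∑ g ∈ partialColorings K (R \ A), F (A.piecewise (fun _ => some c) g) := by
  rw [sum_sigma']
  have left_inv : ∀ f : W → Option C, (colorClass f c).piecewise (fun _ => some c)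
      ((colorClass f c).piecewise (fun _ => none) f) = f := fun f => by
    funext u
    by_cases hu : f u = some c <;> simp [colorClass, piecewise, hu]
  refine sum_nbij' (fun f => ⟨colorClass f c, (colorClass f c).piecewise (fun _ => none) f⟩)
    (fun x => x.1.piecewise (fun _ => some c) x.2) ?_ ?_ ?_ ?_ ?_
  · intro f hf
    simp only [mem_sigma, mem_powerset, mem_partialColorings, colorClass, piecewise] at hf ⊢
    grind
  · rintro ⟨A, g⟩ hg
    simp only [mem_sigma, mem_powerset, mem_partialColorings, piecewise] at hg ⊢
    grind
  · exact fun f _ => left_inv f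
  · rintro ⟨A, g⟩ hg
    have hg : g ∈ partialColorings K (R \ A) := (mem_sigma.1 hg).2
    have hclass : colorClass (A.piecewise (fun _ => some c) g) c = A :=
      colorClass_piecewise_self A (ne_some_of_mem_partialColorings hg hc)
    dsimp only
    rw [hclass]
    refine Sigma.ext rfl <| heq_of_eq <| funext fun u => ?_
    by_cases hu : u ∈ A
    · simp [hu, eq_none_of_mem_partialColorings hg (notMem_sdiff_of_mem_right hu)]
    · simp [hu]
  · exact fun f _ => by rw [left_inv]

theorem sum_partialColorings_eq_exposureSum (p q : ℝ) (w : Finset W → ℝ) (K : Finset C) :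
    ∀ R : Finset W, ∑ f ∈ partialColorings K R,
        (∏ u ∈ R, valueWgt p q (f u)) * ∏ c ∈ K, w (colorClass f c) =
      exposureSum p q w #K R := by
  induction K using Finset.induction_on with
  | empty =>
    intro R
    have hsingle : partialColorings (∅ : Finset C) R = {fun _ => none} := by
      ext f
      simp [mem_partialColorings, funext_iff, Option.eq_none_iff_forall_ne_some]
    simp [hsingle, exposureSum, valueWgt]
  | insert c K hc ih =>
    intro R
    rw [sum_partialColorings_insert hc, card_insert_of_notMem hc, exposureSum]
    refine sum_congr rfl fun A hA => ?_
    rw [← ih, mul_sum]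
    refine sum_congr rfl fun g hg => ?_
    have hclass : colorClass (A.piecewise (fun _ => some c) g) c = A :=
      colorClass_piecewise_self A (ne_some_of_mem_partialColorings hg hc)
    have hclass' : ∀ c' ∈ K, colorClass (A.piecewise (fun _ => some c) g) c' = colorClass g c' :=
      fun c' hc' => colorClass_piecewise_of_ne
        (fun u hu => eq_none_of_mem_partialColorings hg (notMem_sdiff_of_mem_right hu))
        (ne_of_mem_of_not_mem hc' hc)
    have hvalue : ∏ u ∈ R, valueWgt p q (A.piecewise (fun _ => some c) g u) =
        p ^ #A * ∏ u ∈ R \ A, valueWgt p q (g u) := by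
      rw [← prod_sdiff (mem_powerset.1 hA), mul_comm, ← prod_const]
      congr 1
      · exact prod_congr rfl fun u hu => by simp [hu, valueWgt]
      · exact prod_congr rfl fun u hu => by simp [(mem_sdiff.1 hu).2]
    rw [prod_insert hc, hclass, prod_congr rfl fun c' hc' => congrArg w (hclass' c' hc'), hvalue]
    ring

end Coloring

theorem sum_prod_mul_comp {ι α β M : Type*} [Fintype ι] [DecidableEq ι] [Fintype α] [Fintype β]
    [DecidableEq β] [CommSemiring M] (π : α → β) (x : α → M) (F : (ι → β) → M) :
    ∑ h : ι → α, (∏ i, x (h i)) * F (π ∘ h) =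
      ∑ f : ι → β, (∏ i, ∑ z with π z = f i, x z) * F f := by
  rw [← sum_fiberwise univ fun h : ι → α => π ∘ h]
  refine sum_congr rfl fun f _ => ?_
  have hfiber : ({h | π ∘ h = f} : Finset (ι → α)) =
      Fintype.piFinset fun i => {z | π z = f i} := by
    ext h
    simp [funext_iff]
  rw [prod_univ_sum, sum_mul, hfiber]
  refine sum_congr rfl fun h hh => ?_
  rw [← hfiber, mem_filter_univ] at hh
  rw [hh]

section Outcome

variable {W : Type*} [Fintype W] {χ : ℕ} {p₀ : ℝ}

theorem wgt_nonneg (hp₀ : 0 ≤ p₀) (hp₁ : p₀ ≤ 1) (ω : Outcome W χ) : 0 ≤ wgt p₀ χ ω := by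
  refine prod_nonneg fun u _ => mul_nonneg ?_ (by positivity)
  split_ifs <;> linarith

/-- The partial coloring in which exactly the activated nodes are colored, by the colors they
picked. -/
def toColoring (ω : Outcome W χ) : W → Option (Fin χ) :=
  fun u => if ω.1 u then some (ω.2 u) else none

theorem mem_colorClass_toColoring {ω : Outcome W χ} {u : W} {c : Fin χ} :
    u ∈ colorClass (toColoring ω) c ↔ ω.1 u = true ∧ ω.2 u = c := by
  by_cases hu : ω.1 u = true <;> simp [colorClass, toColoring, hu]

variable [DecidableEq W]

theorem sum_wgt_mul_toColoring (p₀ : ℝ) (hχ : χ ≠ 0) (F : (W → Option (Fin χ)) → ℝ) :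
    ∑ ω : Outcome W χ, wgt p₀ χ ω * F (toColoring ω) =
      ∑ f : W → Option (Fin χ), (∏ u, valueWgt (p₀ / χ) (1 - p₀) (f u)) * F f := by
  let nodeWgt : Bool × Fin χ → ℝ := fun z => (if z.1 then p₀ else 1 - p₀) * (1 / χ)
  let color : Bool × Fin χ → Option (Fin χ) := fun z => if z.1 then some z.2 else none
  have sum_fiber : ∀ y, ∑ z with color z = y, nodeWgt z = valueWgt (p₀ / χ) (1 - p₀) y := by
    intro y
    rw [sum_filter, Fintype.sum_prod_type]
    cases y with
    | none => simp [nodeWgt, color, valueWgt, mul_left_comm (χ : ℝ), hχ]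
    | some c => simp [nodeWgt, color, valueWgt, div_eq_mul_inv]
  calc ∑ ω : Outcome W χ, wgt p₀ χ ω * F (toColoring ω)
      = ∑ h : W → Bool × Fin χ, (∏ u, nodeWgt (h u)) * F (color ∘ h) :=
        (Fintype.sum_equiv (Equiv.arrowProdEquivProdArrow W (fun _ => Bool) fun _ => Fin χ)
          _ _ fun _ => rfl).symm
    _ = _ := by simp only [sum_prod_mul_comp color nodeWgt F, sum_fiber]

theorem sum_wgt (p₀ : ℝ) (hχ : χ ≠ 0) : ∑ ω : Outcome W χ, wgt p₀ χ ω = 1 := by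
  have sum_valueWgt : ∑ y : Option (Fin χ), valueWgt (p₀ / χ) (1 - p₀) y = 1 := by
    simp only [Fintype.sum_option, valueWgt, sum_const, card_univ, Fintype.card_fin, nsmul_eq_mul]
    field_simp
    ring
  calc ∑ ω : Outcome W χ, wgt p₀ χ ω
      = ∑ f : W → Option (Fin χ), ∏ u, valueWgt (p₀ / χ) (1 - p₀) (f u) := by
        simpa using sum_wgt_mul_toColoring p₀ hχ fun _ => 1
    _ = ∏ _u : W, ∑ y : Option (Fin χ), valueWgt (p₀ / χ) (1 - p₀) y := by
        rw [prod_univ_sum, Fintype.piFinset_univ]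
    _ = 1 := by simp [sum_valueWgt]

variable {E : Finset (Sym2 W)} {D : Sym2 W → Finset W} {d : ℕ}

theorem IsGuarded.sum_wgt_mul_exp_neg_card_isolates_le (h : IsGuarded E D d) (hp₀ : 0 ≤ p₀)
    (hp₁ : p₀ < 1) (hχ : χ ≠ 0) :
    ∑ ω : Outcome W χ, wgt p₀ χ ω *
        Real.exp (-#{c | Isolates E D (colorClass (toColoring ω) c)}) ≤
      Real.exp (-(p₀ ^ 2 * Real.exp (-(p₀ / χ / (1 - p₀) * d)) / (32 * χ) * #E)) := by
  have total : 1 - p₀ + χ * (p₀ / χ) = 1 := by field_simp; ring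
  calc ∑ ω : Outcome W χ, wgt p₀ χ ω *
          Real.exp (-#{c | Isolates E D (colorClass (toColoring ω) c)})
      = ∑ f : W → Option (Fin χ), (∏ u, valueWgt (p₀ / χ) (1 - p₀) (f u)) *
          ∏ c, isolationFactor E D (colorClass f c) := by
        simp only [prod_isolationFactor]
        exact sum_wgt_mul_toColoring p₀ hχ fun f =>
          Real.exp (-#{c | Isolates E D (colorClass f c)})
    _ = exposureSum (p₀ / χ) (1 - p₀) (isolationFactor E D) χ univ := by
        have huniv : partialColorings (univ : Finset (Fin χ)) (univ : Finset W) = univ := by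
          ext f
          simp [mem_partialColorings]
        rw [← huniv, sum_partialColorings_eq_exposureSum, card_univ, Fintype.card_fin]
    _ ≤ _ := h.exposureSum_isolationFactor_le (by positivity) (sub_pos.2 hp₁) χ univ total.le
    _ = _ := by
        rw [total, one_pow, one_mul, sym2_univ, inter_univ]
        congr 3
        field_simp

end Outcome

theorem one_sub_exp_mul_sum_le {Ω : Type*} [Fintype Ω] {P : Ω → ℝ} (hP : ∀ ω, 0 ≤ P ω)
    (hP_sum : ∑ ω, P ω = 1) (X : Ω → ℝ) (y : ℝ) :
    1 - Real.exp y * ∑ ω, P ω * Real.exp (-X ω) ≤ ∑ ω, if y ≤ X ω then P ω else 0 := by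
  rw [sub_le_iff_le_add, ← hP_sum, mul_sum, ← sum_add_distrib]
  refine sum_le_sum fun ω _ => ?_
  rw [mul_left_comm, ← Real.exp_add]
  split_ifs with hy
  · exact le_add_of_nonneg_right (mul_nonneg (hP ω) (Real.exp_nonneg _))
  · rw [zero_add]
    exact le_mul_of_one_le_right (hP ω) (Real.one_le_exp (by linarith))

theorem card_image_add_card_le {α β : Type*} [DecidableEq β] {s : Finset α} {f : α → β}
    {t : Finset β} (ht : ∀ c ∈ t, 1 < #{x ∈ s | f x = c}) : #(s.image f) + #t ≤ #s := by
  have hsub : t ⊆ s.image f := fun c hc => by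
    obtain ⟨x, hx⟩ := card_pos.1 (zero_lt_one.trans (ht c hc))
    obtain ⟨hxs, rfl⟩ := mem_filter.1 hx
    exact mem_image_of_mem f hxs
  calc #(s.image f) + #t = ∑ c ∈ s.image f, (1 + if c ∈ t then 1 else 0) := by
        rw [sum_add_distrib, sum_ite_mem, inter_eq_right.2 hsub]
        simp
    _ ≤ ∑ c ∈ s.image f, #{x ∈ s | f x = c} := by
        refine sum_le_sum fun c hc => ?_
        split_ifs with h
        · exact ht c h
        · obtain ⟨x, hx, hxc⟩ := mem_image.1 hc
          exact card_pos.2 ⟨x, mem_filter.2 ⟨hx, hxc⟩⟩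
    _ = #s := (card_eq_sum_card_image f s).symm

section Slack

variable {V : Type*} [Fintype V] [DecidableEq V] {G : SimpleGraph V} {v : V} {S : Finset V}

theorem mem_nbrNonEdges {e : Sym2 V} :
    e ∈ nbrNonEdges G v S ↔ ¬ e.IsDiag ∧ e ∉ G.edgeSet ∧ ∀ u ∈ e, G.Adj v u ∧ u ∈ S := by
  simp [nbrNonEdges]

variable [DecidableRel G.Adj]

/-- The nodes of `S` adjacent to `v` or to an end of `e`. The neighbors of `v` are included to make
two non-edges isolated by the same color class coincide. -/
def guardSet (G : SimpleGraph V) [DecidableRel G.Adj] (v : V) (S : Finset V) (e : Sym2 V) :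
    Finset V :=
  (insert v e.toFinset).biUnion fun u => G.neighborFinset u ∩ S

theorem mem_guardSet {e : Sym2 V} {w : V} :
    w ∈ guardSet G v S e ↔ (G.Adj v w ∨ ∃ u ∈ e, G.Adj u w) ∧ w ∈ S := by
  simp only [guardSet, mem_biUnion, mem_insert, Sym2.mem_toFinset, mem_inter,
    SimpleGraph.mem_neighborFinset]
  grind

theorem isGuarded_nbrNonEdges {Δ : ℕ}
    (hΔ : ∀ u ∈ insert v (G.neighborFinset v ∩ S), #(G.neighborFinset u ∩ S) ≤ Δ) :
    IsGuarded (nbrNonEdges G v S) (guardSet G v S) (3 * Δ) where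
  not_isDiag e he := (mem_nbrNonEdges.1 he).1
  toFinset_subset e he _ _ u hu := by
    obtain ⟨hvu, huS⟩ := (mem_nbrNonEdges.1 he).2.2 u (Sym2.mem_toFinset.1 hu)
    exact mem_guardSet.2 ⟨Or.inl hvu, huS⟩
  card_le e he := by
    obtain ⟨hdiag, -, hends⟩ := mem_nbrNonEdges.1 he
    calc #(guardSet G v S e) ≤ #(insert v e.toFinset) * Δ :=
          card_biUnion_le_card_mul _ _ _ fun u hu => hΔ u (by
            simp only [mem_insert, Sym2.mem_toFinset, mem_inter,
              SimpleGraph.mem_neighborFinset] at hu ⊢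
            exact hu.imp_right (hends u))
      _ ≤ 3 * Δ := by
          gcongr
          exact (card_insert_le _ _).trans (by rw [e.card_toFinset_of_not_isDiag hdiag])

variable {χ : ℕ} {ω : Outcome V χ}

theorem retains_of_colorClass_inter_guardSet_eq {c : Fin χ} {e : Sym2 V}
    (he : e ∈ nbrNonEdges G v S)
    (hclass : colorClass (toColoring ω) c ∩ guardSet G v S e = e.toFinset) {u : V} (hu : u ∈ e) :
    Retains G S ω u ∧ ω.2 u = c := by
  obtain ⟨-, hedge, hends⟩ := mem_nbrNonEdges.1 he
  have picks : ∀ w ∈ e, ω.1 w = true ∧ ω.2 w = c := fun w hw =>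
    mem_colorClass_toColoring.1 (inter_subset_left (hclass.symm ▸ Sym2.mem_toFinset.2 hw))
  refine ⟨⟨(hends u hu).2, (picks u hu).1, fun w hwS hwu hadj hact hcol => hedge ?_⟩,
    (picks u hu).2⟩
  have hw : w ∈ e := by
    rw [← Sym2.mem_toFinset, ← hclass, mem_inter, mem_colorClass_toColoring, mem_guardSet]
    exact ⟨⟨hact, hcol.trans (picks u hu).2⟩, Or.inr ⟨u, hu, hadj⟩, hwS⟩
  rwa [(Sym2.mem_and_mem_iff hwu.symm).1 ⟨hu, hw⟩, SimpleGraph.mem_edgeSet]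

theorem card_isolates_le_slackInc (G : SimpleGraph V) [DecidableRel G.Adj] (v : V) (S : Finset V)
    (ω : Outcome V χ) :
    (#{c | Isolates (nbrNonEdges G v S) (guardSet G v S) (colorClass (toColoring ω) c)} : ℤ) ≤
      slackInc G S v ω := by
  classical
  set U : Finset V := {u | G.Adj v u ∧ Retains G S ω u} with hU
  have himage : ({c | ∃ u, G.Adj v u ∧ Retains G S ω u ∧ ω.2 u = c} : Finset (Fin χ)) =
      U.image ω.2 := by
    ext c
    simp [hU, and_assoc]
  have hslack : slackInc G S v ω = #U - #(U.image ω.2) := by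
    rw [← himage, slackInc]
    congr!
  rw [hslack, le_sub_iff_add_le']
  norm_cast
  refine card_image_add_card_le fun c hc => ?_
  obtain ⟨e, he, hclass⟩ := (mem_filter.1 hc).2
  obtain ⟨hdiag, -, hends⟩ := mem_nbrNonEdges.1 he
  refine (e.card_toFinset_of_not_isDiag hdiag).symm.trans_le (card_le_card fun u hu => ?_)
  rw [Sym2.mem_toFinset] at hu
  obtain ⟨hretains, hcol⟩ := retains_of_colorClass_inter_guardSet_eq he hclass hu
  simp [hU, (hends u hu).1, hretains, hcol]

theorem sum_wgt_mul_exp_neg_slackInc_le {Δ : ℕ}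
    (hΔ : ∀ u ∈ insert v (G.neighborFinset v ∩ S), #(G.neighborFinset u ∩ S) ≤ Δ) {p₀ : ℝ}
    (hp₀ : 0 ≤ p₀) (hp₁ : p₀ < 1) (hχ : χ ≠ 0) :
    ∑ ω : Outcome V χ, wgt p₀ χ ω * Real.exp (-slackInc G S v ω) ≤
      Real.exp (-(p₀ ^ 2 * Real.exp (-(p₀ / χ / (1 - p₀) * (3 * Δ))) / (32 * χ) *
        #(nbrNonEdges G v S))) := by
  have hbound := (isGuarded_nbrNonEdges hΔ).sum_wgt_mul_exp_neg_card_isolates_le hp₀ hp₁ hχ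
  push_cast at hbound
  refine le_trans ?_ hbound
  gcongr with ω
  · exact wgt_nonneg hp₀ hp₁.le ω
  · exact_mod_cast card_isolates_le_slackInc G v S ω

end Slack

theorem slack_generation_general {c' p₀ : ℝ} (hc' : 0 < c') (hp₀ : 0 < p₀) (hp₁ : p₀ < 1) :
    ∃ a : ℝ, 0 < a ∧ ∃ b : ℝ, 0 < b ∧
      ∀ (V : Type*) [Fintype V] [DecidableEq V]
        (G : SimpleGraph V) [DecidableRel G.Adj] (Δs χ : ℕ),
        0 < χ → c' * (Δs : ℝ) ≤ (χ : ℝ) →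
        ∀ (S : Finset V) (v : V) (mbar : ℕ),
          mbar ≤ #(nbrNonEdges G v S) →
          (∀ u ∈ insert v (G.neighborFinset v ∩ S), #(G.neighborFinset u ∩ S) ≤ Δs) →
          1 - Real.exp (-(b * (mbar : ℝ) / (χ : ℝ))) ≤
            ∑ ω : Outcome V χ,
              (if a * (mbar : ℝ) / (χ : ℝ) ≤ ((slackInc G S v ω : ℤ) : ℝ)
               then wgt p₀ χ ω else 0) := by
  have hq : 0 < 1 - p₀ := sub_pos.2 hp₁
  -- `64 = 2 * 32`: half of the exponent in the moment bound is spent on the factor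
  -- `exp (κ * mbar / χ)` from Markov's inequality.
  set κ : ℝ := p₀ ^ 2 * Real.exp (-(3 * p₀ / ((1 - p₀) * c'))) / 64 with hκ
  have kappa_pos : 0 < κ := by positivity
  refine ⟨κ, kappa_pos, κ, kappa_pos, ?_⟩
  intro V _ _ G _ Δs χ hχ hΔχ S v mbar hm hΔ
  have rate_le : p₀ / χ / (1 - p₀) * (3 * Δs) ≤ 3 * p₀ / ((1 - p₀) * c') := by
    rw [div_div, div_mul_eq_mul_div, div_le_div_iff₀ (by positivity) (by positivity)]
    nlinarith [mul_le_mul_of_nonneg_left hΔχ (mul_pos hp₀ hq).le]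
  have moment_le : ∑ ω : Outcome V χ, wgt p₀ χ ω * Real.exp (-slackInc G S v ω) ≤
      Real.exp (-(2 * κ * mbar / χ)) := by
    refine (sum_wgt_mul_exp_neg_slackInc_le hΔ hp₀.le hp₁ hχ.ne').trans ?_
    calc _ ≤ Real.exp (-(p₀ ^ 2 * Real.exp (-(3 * p₀ / ((1 - p₀) * c'))) / (32 * χ) * mbar)) := by
          gcongr
      _ = _ := by rw [hκ]; congr 2; field_simp; ring
  refine le_trans ?_ (one_sub_exp_mul_sum_le (wgt_nonneg hp₀.le hp₁.le) (sum_wgt p₀ hχ.ne') _ _)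
  rw [sub_le_sub_iff_left]
  calc _ ≤ Real.exp (κ * mbar / χ) * Real.exp (-(2 * κ * mbar / χ)) := by gcongr
    _ = _ := by rw [← Real.exp_add]; ring_nf

open Classical in
/-- **Slack generation with custom color space.** For every constant `c' > 0`
there are constants `a, b > 0` (depending only on `c'`) such that: for all
positive integers `Δs`, `χ` with `χ ≥ c'·Δs`, every set `S` of nodes of a graph
`G`, and every node `v` such that `G[N(v) ∩ S]` contains at least `mbar` non-edges
and every node of `S ∪ {v}` has at most `Δs` neighbors in `S`, running
SlackGeneration on `S` (activation probability `1/20`, palette `[χ]`) increases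
the slack of `v` by at least `a·mbar/χ` with probability at least
`1 − exp(−b·mbar/χ)`. -/
theorem slack_generation (c' : ℝ) (hc' : 0 < c') :
    ∃ a : ℝ, 0 < a ∧ ∃ b : ℝ, 0 < b ∧
      ∀ (V : Type) [Fintype V] [DecidableEq V]
        (G : SimpleGraph V) [DecidableRel G.Adj] (Δs χ : ℕ),
        0 < Δs → 0 < χ → c' * (Δs : ℝ) ≤ (χ : ℝ) →
        ∀ (S : Finset V) (v : V) (mbar : ℕ),
          mbar ≤ (nbrNonEdges G v S).card →
          (∀ u ∈ S ∪ {v}, (G.neighborFinset u ∩ S).card ≤ Δs) →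
          1 - Real.exp (-(b * (mbar : ℝ) / (χ : ℝ))) ≤
            ∑ ω : Outcome V χ,
              (if a * (mbar : ℝ) / (χ : ℝ) ≤ ((slackInc G S v ω : ℤ) : ℝ)
               then wgt (1 / 20) χ ω else 0) := by
  obtain ⟨a, ha, b, hb, h⟩ :=
    slack_generation_general hc' (p₀ := 1 / 20) (by norm_num) (by norm_num)
  exact ⟨a, ha, b, hb, fun V _ _ G _ Δs χ _ hχ hΔχ S v mbar hm hΔ =>
    h V G Δs χ hχ hΔχ S v mbar hm fun u hu => hΔ u (by grind)⟩

end SlackGen
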